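/- arXiv:math/9403216 — 2 statements merged into one kernel-verified Lean document; each statement's English description precedes it below -/
import Mathlib

section
/- (Jackson's transformation of a terminating ₂φ₁ into a ₃φ₂) Let 0<q<1, n∈ℤ_{≥0}, b,c,z∈ℂ with b≠0, z≠0, c ∉ {1,q^{-1},…,q^{-n+1}} and cq/(bz) ∉ {1,q^{-1},…,q^{-n+1}}. Then ₂φ₁(q^{-n}, b; c; q, z) = (q^{-n}bz/c;q)_n · ₃φ₂(q^{-n}, c/b, 0; c, cq b^{-1} z^{-1}; q, q). -/
/-!
Write `c = a b` and `z = a x`, so that the two sides are `₂φ₁(q⁻ⁿ, b; ab; q, ax)` and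
`(q⁻ⁿx;q)ₙ ₃φ₂(q⁻ⁿ, a, 0; ab, q/x; q, q)`. With `a` and `x` fixed, both satisfy the recurrence
`Fₙ₊₁(b) = Fₙ(b) - q⁻ⁿ⁻¹ x (a - ab) / (1 - ab) * Fₙ(bq)`, and `F₀ = 1`. On the left this is the
q-Pascal rule for the coefficients `(q⁻ⁿ;q)ₖ / (q;q)ₖ`. On the right, where
`(q⁻ⁿ⁻¹x;q)ₙ₊₁ = (1 - q⁻ⁿ⁻¹x) (q⁻ⁿx;q)ₙ`, one expands `1 - q⁻ⁿ⁻¹x` and applies one form of the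
q-Pascal rule to the term `1` and the other form to the term `q⁻ⁿ⁻¹x`.
-/

noncomputable section

/-- The finite q-shifted factorial `(a;q)_k`. -/
def qp (q a : ℂ) (k : ℕ) : ℂ := ∏ j ∈ Finset.range k, (1 - a * q ^ j)

/-- The basic hypergeometric series `₂φ₁(a,b;c;q,z)`. -/
def phi21 (q a b c z : ℂ) : ℂ :=
  ∑' k : ℕ, qp q a k * qp q b k / (qp q c k * qp q q k) * z ^ k

/-- The basic hypergeometric series `₃φ₂(a₁,a₂,a₃;b₁,b₂;q,z)`. -/
def phi32 (q a1 a2 a3 b1 b2 z : ℂ) : ℂ :=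
  ∑' k : ℕ, qp q a1 k * qp q a2 k * qp q a3 k / (qp q b1 k * qp q b2 k * qp q q k) * z ^ k

section QShiftedFactorial

lemma qp_zero (q a : ℂ) : qp q a 0 = 1 :=
  Finset.prod_range_zero _

lemma qp_zero_left (q : ℂ) (k : ℕ) : qp q 0 k = 1 := by
  simp [qp]

lemma qp_succ (q a : ℂ) (k : ℕ) : qp q a (k + 1) = qp q a k * (1 - a * q ^ k) :=
  Finset.prod_range_succ _ _

lemma qp_succ_left (q a : ℂ) (k : ℕ) : qp q a (k + 1) = (1 - a) * qp q (a * q) k := by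
  simp only [qp, Finset.prod_range_succ', pow_succ', pow_zero, mul_one, mul_assoc]
  exact mul_comm _ _

lemma qp_inv_pow_eq_zero {q : ℂ} (hq : q ≠ 0) {n k : ℕ} (h : n < k) :
    qp q (q ^ n)⁻¹ k = 0 :=
  Finset.prod_eq_zero (Finset.mem_range.2 h) (by rw [inv_mul_cancel₀ (pow_ne_zero n hq), sub_self])

lemma inv_pow_succ_mul_self {G₀ : Type*} [GroupWithZero G₀] {a : G₀} (ha : a ≠ 0) (n : ℕ) :
    (a ^ (n + 1))⁻¹ * a = (a ^ n)⁻¹ := by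
  rw [pow_succ', mul_inv_rev, inv_mul_cancel_right₀ ha]

lemma qp_inv_pow_succ_mul {q : ℂ} (hq : q ≠ 0) (x : ℂ) (n k : ℕ) :
    qp q ((q ^ (n + 1))⁻¹ * x) (k + 1) =
      (1 - (q ^ (n + 1))⁻¹ * x) * qp q ((q ^ n)⁻¹ * x) k := by
  rw [qp_succ_left, mul_right_comm, inv_pow_succ_mul_self hq]

end QShiftedFactorial

section SignedQBinom

/-- The coefficient `(q⁻ⁿ;q)ₖ / (q;q)ₖ` common to all series terminated by `q⁻ⁿ`. It equals
`(-1)ᵏ q^(k(k-1)/2 - nk)` times the Gaussian binomial coefficient; in this normalization a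
terminating series is a sum against it. -/
def signedQBinom (q : ℂ) (n k : ℕ) : ℂ := qp q (q ^ n)⁻¹ k / qp q q k

lemma signedQBinom_zero_right (q : ℂ) (n : ℕ) : signedQBinom q n 0 = 1 := by
  rw [signedQBinom, qp_zero, qp_zero, div_one]

lemma signedQBinom_eq_zero {q : ℂ} (hq : q ≠ 0) {n k : ℕ} (h : n < k) :
    signedQBinom q n k = 0 := by
  rw [signedQBinom, qp_inv_pow_eq_zero hq h, zero_div]

lemma signedQBinom_succ_right (q : ℂ) (n k : ℕ) :
    signedQBinom q n (k + 1) =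
      signedQBinom q n k * (1 - (q ^ n)⁻¹ * q ^ k) / (1 - q ^ (k + 1)) := by
  rw [signedQBinom, signedQBinom, qp_succ, qp_succ, ← pow_succ', div_mul_eq_mul_div, div_div]

lemma signedQBinom_succ_succ {q : ℂ} (hq : q ≠ 0) (n k : ℕ) :
    signedQBinom q (n + 1) (k + 1) =
      (1 - (q ^ (n + 1))⁻¹) * signedQBinom q n k / (1 - q ^ (k + 1)) := by
  rw [signedQBinom, signedQBinom, qp_succ_left, inv_pow_succ_mul_self hq, qp_succ, ← pow_succ',
    ← mul_div_assoc, div_div]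

lemma signedQBinom_pascal {q : ℂ} (hq : q ≠ 0) (n : ℕ) {k : ℕ} (hk : q ^ (k + 1) ≠ 1) :
    signedQBinom q (n + 1) (k + 1) =
      signedQBinom q n (k + 1) - (q ^ (n + 1))⁻¹ * signedQBinom q n k := by
  have hk' : 1 - q ^ (k + 1) ≠ 0 := sub_ne_zero.2 hk.symm
  rw [signedQBinom_succ_succ hq, signedQBinom_succ_right, ← inv_pow_succ_mul_self hq n]
  field_simp
  ring

lemma signedQBinom_pascal' {q : ℂ} (hq : q ≠ 0) (n : ℕ) {k : ℕ} (hk : q ^ (k + 1) ≠ 1) :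
    signedQBinom q (n + 1) (k + 1) * q ^ (k + 1) =
      signedQBinom q n (k + 1) - signedQBinom q n k := by
  have hk' : 1 - q ^ (k + 1) ≠ 0 := sub_ne_zero.2 hk.symm
  rw [signedQBinom_succ_succ hq, signedQBinom_succ_right, ← inv_pow_succ_mul_self hq n]
  field_simp
  ring

variable {q : ℂ} {n : ℕ}

lemma sum_range_succ_signedQBinom_mul (hq : q ≠ 0) (n : ℕ) (f : ℕ → ℂ) :
    ∑ k ∈ Finset.range (n + 2), signedQBinom q n k * f k =
      ∑ k ∈ Finset.range (n + 1), signedQBinom q n k * f k := by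
  rw [Finset.sum_range_succ, signedQBinom_eq_zero hq n.lt_succ_self, zero_mul, add_zero]

lemma sum_signedQBinom_succ_mul (hq : q ≠ 0) (hq' : ∀ k < n + 1, q ^ (k + 1) ≠ 1) (f : ℕ → ℂ) :
    ∑ k ∈ Finset.range (n + 2), signedQBinom q (n + 1) k * f k =
      ∑ k ∈ Finset.range (n + 1), signedQBinom q n k * f k -
        (q ^ (n + 1))⁻¹ * ∑ k ∈ Finset.range (n + 1), signedQBinom q n k * f (k + 1) := by
  rw [← sum_range_succ_signedQBinom_mul hq n f, Finset.sum_range_succ' _ (n + 1),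
    Finset.sum_range_succ' _ (n + 1), Finset.mul_sum, add_sub_right_comm,
    ← Finset.sum_sub_distrib, signedQBinom_zero_right, signedQBinom_zero_right]
  congr 1
  refine Finset.sum_congr rfl fun k hk => ?_
  rw [signedQBinom_pascal hq n (hq' k (Finset.mem_range.1 hk))]
  ring

lemma sum_signedQBinom_succ_mul_pow_mul (hq : q ≠ 0) (hq' : ∀ k < n + 1, q ^ (k + 1) ≠ 1)
    (f : ℕ → ℂ) :
    ∑ k ∈ Finset.range (n + 2), signedQBinom q (n + 1) k * (q ^ k * f k) =
      ∑ k ∈ Finset.range (n + 1), signedQBinom q n k * f k -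
        ∑ k ∈ Finset.range (n + 1), signedQBinom q n k * f (k + 1) := by
  rw [← sum_range_succ_signedQBinom_mul hq n f, Finset.sum_range_succ' _ (n + 1),
    Finset.sum_range_succ' _ (n + 1), add_sub_right_comm, ← Finset.sum_sub_distrib,
    signedQBinom_zero_right, signedQBinom_zero_right, pow_zero, one_mul, one_mul]
  congr 1
  refine Finset.sum_congr rfl fun k hk => ?_
  rw [← mul_assoc, signedQBinom_pascal' hq n (hq' k (Finset.mem_range.1 hk)), sub_mul]

end SignedQBinom

section TerminatingSeries

variable {q : ℂ} {n : ℕ}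

lemma tsum_signedQBinom_mul (hq : q ≠ 0) (n : ℕ) (f : ℕ → ℂ) :
    ∑' k, signedQBinom q n k * f k = ∑ k ∈ Finset.range (n + 1), signedQBinom q n k * f k :=
  tsum_eq_sum fun k hk => by
    rw [signedQBinom_eq_zero hq (by simpa using hk), zero_mul]

lemma phi21_inv_pow (hq : q ≠ 0) (n : ℕ) (b c z : ℂ) :
    phi21 q (q ^ n)⁻¹ b c z =
      ∑ k ∈ Finset.range (n + 1), signedQBinom q n k * (qp q b k / qp q c k * z ^ k) := by
  rw [← tsum_signedQBinom_mul hq, phi21]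
  exact tsum_congr fun k => by rw [signedQBinom]; ring

lemma phi32_inv_pow (hq : q ≠ 0) (n : ℕ) (a a' c d z : ℂ) :
    phi32 q (q ^ n)⁻¹ a a' c d z =
      ∑ k ∈ Finset.range (n + 1),
        signedQBinom q n k * (z ^ k * (qp q a k * qp q a' k / (qp q c k * qp q d k))) := by
  rw [← tsum_signedQBinom_mul hq, phi32]
  exact tsum_congr fun k => by rw [signedQBinom]; ring

lemma phi21_inv_pow_succ (hq : q ≠ 0) (hq' : ∀ k < n + 1, q ^ (k + 1) ≠ 1) (b c z : ℂ) :
    phi21 q (q ^ (n + 1))⁻¹ b c z =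
      phi21 q (q ^ n)⁻¹ b c z -
        (q ^ (n + 1))⁻¹ * (z * (1 - b) / (1 - c)) * phi21 q (q ^ n)⁻¹ (b * q) (c * q) z := by
  simp only [phi21_inv_pow hq]
  rw [sum_signedQBinom_succ_mul hq hq', mul_assoc, Finset.mul_sum _ _ (z * (1 - b) / (1 - c))]
  congr 2
  refine Finset.sum_congr rfl fun k _ => ?_
  rw [qp_succ_left q b, qp_succ_left q c, mul_div_mul_comm]
  ring

lemma qp_div_sub_qp_succ_div (a : ℂ) {c x : ℂ} {k : ℕ} (hx : x ≠ 0) (hc : c * q ^ k ≠ 1)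
    (hxq : q / x * q ^ k ≠ 1) :
    x * (qp q a k / (qp q c k * qp q (q / x) k) -
          qp q a (k + 1) / (qp q c (k + 1) * qp q (q / x) (k + 1))) +
        q ^ (k + 1) * (qp q a (k + 1) / (qp q c (k + 1) * qp q (q / x) (k + 1))) =
      x * (a - c) / (1 - c) * (q ^ k * (qp q a k / (qp q (c * q) k * qp q (q / x) k))) := by
  have hc' : 1 - c * q ^ k ≠ 0 := sub_ne_zero.2 hc.symm
  have hxq' : 1 - q / x * q ^ k ≠ 0 := sub_ne_zero.2 hxq.symm
  set v := qp q a k / (qp q c k * qp q (q / x) k) with hv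
  have hsucc : (x - q ^ (k + 1)) * (qp q a (k + 1) / (qp q c (k + 1) * qp q (q / x) (k + 1))) =
      x * (v * ((1 - a * q ^ k) / (1 - c * q ^ k))) := by
    have hfactor : x - q ^ (k + 1) = x * (1 - q / x * q ^ k) := by
      field_simp
      ring
    rw [hfactor, mul_assoc, qp_succ q a, qp_succ q c, qp_succ q (q / x), mul_mul_mul_comm,
      mul_div_mul_comm, ← hv]
    linear_combination x * v * mul_div_mul_right (1 - a * q ^ k) (1 - c * q ^ k) hxq'
  have hshift : qp q a k / (qp q (c * q) k * qp q (q / x) k) / (1 - c) = v / (1 - c * q ^ k) := by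
    rw [hv, div_div, div_div, mul_right_comm, mul_comm _ (1 - c), ← qp_succ_left, qp_succ,
      mul_right_comm]
  calc
    _ = x * v - x * (v * ((1 - a * q ^ k) / (1 - c * q ^ k))) := by
      rw [← hsucc]
      ring
    _ = x * (a - c) * q ^ k * (v / (1 - c * q ^ k)) := by
      linear_combination x * v * one_sub_div hc' (a := 1 - a * q ^ k)
    _ = _ := by
      rw [← hshift]
      ring

lemma phi32_inv_pow_succ (hq : q ≠ 0) (hq' : ∀ k < n + 1, q ^ (k + 1) ≠ 1) (a : ℂ) {c x : ℂ}
    (hx : x ≠ 0) (hc : ∀ k < n + 1, c * q ^ k ≠ 1) (hxq : ∀ k < n + 1, q / x * q ^ k ≠ 1) :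
    (1 - (q ^ (n + 1))⁻¹ * x) * phi32 q (q ^ (n + 1))⁻¹ a 0 c (q / x) q =
      phi32 q (q ^ n)⁻¹ a 0 c (q / x) q -
        (q ^ (n + 1))⁻¹ * (x * (a - c) / (1 - c)) *
          phi32 q (q ^ n)⁻¹ a 0 (c * q) (q / x) q := by
  simp only [phi32_inv_pow hq, qp_zero_left, mul_one]
  set v : ℕ → ℂ := fun k => qp q a k / (qp q c k * qp q (q / x) k)
  have hpascal := sum_signedQBinom_succ_mul hq hq' fun k => q ^ k * v k
  have hpascal' := sum_signedQBinom_succ_mul_pow_mul hq hq' v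
  have hdiff : x * (∑ k ∈ Finset.range (n + 1), signedQBinom q n k * v k -
          ∑ k ∈ Finset.range (n + 1), signedQBinom q n k * v (k + 1)) +
        ∑ k ∈ Finset.range (n + 1), signedQBinom q n k * (q ^ (k + 1) * v (k + 1)) =
      x * (a - c) / (1 - c) * ∑ k ∈ Finset.range (n + 1), signedQBinom q n k *
        (q ^ k * (qp q a k / (qp q (c * q) k * qp q (q / x) k))) := by
    rw [← Finset.sum_sub_distrib, Finset.mul_sum, Finset.mul_sum, ← Finset.sum_add_distrib]
    refine Finset.sum_congr rfl fun k hk => ?_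
    have hkn := Finset.mem_range.1 hk
    linear_combination
      signedQBinom q n k * qp_div_sub_qp_succ_div a hx (hc k hkn) (hxq k hkn)
  linear_combination
    hpascal - (q ^ (n + 1))⁻¹ * x * hpascal' - (q ^ (n + 1))⁻¹ * hdiff

end TerminatingSeries

theorem phi21_inv_pow_eq_qp_mul_phi32 {q : ℂ} (hq : q ≠ 0) {n : ℕ}
    (hq' : ∀ k < n, q ^ (k + 1) ≠ 1) (a b : ℂ) {x : ℂ} (hx : x ≠ 0)
    (hc : ∀ k < n, a * b * q ^ k ≠ 1) (hxq : ∀ k < n, q / x * q ^ k ≠ 1) :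
    phi21 q (q ^ n)⁻¹ b (a * b) (a * x) =
      qp q ((q ^ n)⁻¹ * x) n * phi32 q (q ^ n)⁻¹ a 0 (a * b) (q / x) q := by
  induction n generalizing b with
  | zero =>
    rw [phi21_inv_pow hq, phi32_inv_pow hq]
    simp [qp_zero]
  | succ n ih =>
    have hq'_lt : ∀ k < n, q ^ (k + 1) ≠ 1 := fun k hk => hq' k (hk.trans n.lt_succ_self)
    have hxq_lt : ∀ k < n, q / x * q ^ k ≠ 1 := fun k hk => hxq k (hk.trans n.lt_succ_self)
    have ih_self := ih hq'_lt b (fun k hk => hc k (hk.trans n.lt_succ_self)) hxq_lt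
    have ih_shift := ih hq'_lt (b * q)
      (fun k hk => by simpa only [pow_succ', mul_assoc] using hc (k + 1) (Nat.succ_lt_succ hk))
      hxq_lt
    rw [← mul_assoc a b q] at ih_shift
    have hrec := phi32_inv_pow_succ hq hq' a hx hc hxq
    rw [phi21_inv_pow_succ hq hq', ih_self, ih_shift, qp_inv_pow_succ_mul hq]
    linear_combination -qp q ((q ^ n)⁻¹ * x) n * hrec

theorem stmt7_general {q : ℂ} (hq : q ≠ 0) {n : ℕ} (hq' : ∀ k < n, q ^ (k + 1) ≠ 1) {b c z : ℂ}
    (hb : b ≠ 0) (hz : z ≠ 0) (hc0 : c ≠ 0) (hc : ∀ j < n, c * q ^ j ≠ 1)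
    (hcz : ∀ j < n, c * q / (b * z) * q ^ j ≠ 1) :
    phi21 q (q ^ n)⁻¹ b c z =
      qp q ((q ^ n)⁻¹ * b * z / c) n *
        phi32 q (q ^ n)⁻¹ (c / b) 0 c (c * q / (b * z)) q := by
  have hab : c / b * b = c := div_mul_cancel₀ c hb
  have hax : c / b * (b * z / c) = z := by field_simp
  have hqx : q / (b * z / c) = c * q / (b * z) := by field_simp
  have hx : b * z / c ≠ 0 := div_ne_zero (mul_ne_zero hb hz) hc0
  have h := phi21_inv_pow_eq_qp_mul_phi32 hq hq' (c / b) b hx (by rwa [hab]) (by rwa [hqx])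
  rwa [hab, hax, hqx, ← mul_div_assoc, ← mul_assoc] at h

/-- Jackson's transformation of a terminating `₂φ₁` into a `₃φ₂`:
`₂φ₁(q^{-n}, b; c; q, z) = (q^{-n}bz/c;q)_n ₃φ₂(q^{-n}, c/b, 0; c, cq/(bz); q, q)`
for `0<q<1`, `b ≠ 0`, `z ≠ 0`, `c ≠ 0`, and the lower parameters `c`, `cq/(bz)`
avoiding `{1, q^{-1}, …, q^{-n+1}}`. -/
theorem stmt7 (q : ℝ) (hq0 : 0 < q) (hq1 : q < 1) (n : ℕ) (b c z : ℂ)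
    (hb : b ≠ 0) (hz : z ≠ 0) (hc0 : c ≠ 0)
    (hc : ∀ j : ℕ, j < n → c * (q : ℂ) ^ j ≠ 1)
    (hcz : ∀ j : ℕ, j < n → c * (q : ℂ) / (b * z) * (q : ℂ) ^ j ≠ 1) :
    phi21 (q : ℂ) (((q : ℂ) ^ n)⁻¹) b c z =
      qp (q : ℂ) (((q : ℂ) ^ n)⁻¹ * b * z / c) n *
        phi32 (q : ℂ) (((q : ℂ) ^ n)⁻¹) (c / b) 0 c (c * (q : ℂ) / (b * z)) (q : ℂ) :=
  stmt7_general (mod_cast hq0.ne')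
    (fun k _ => mod_cast (pow_lt_one₀ hq0.le hq1 k.succ_ne_zero).ne) hb hz hc0 hc hcz
end
end

section
/- Let 0<q<1 and c,z∈ℂ with z≠0, |z|>|c|, and c ∉ {q^{-n} : n∈ℤ_{≥0}}. Then Σ_{k=-∞}^∞ (-1)^k q^{k(k-1)/2} z^k/(c;q)_k = (q, z, q/z;q)_∞ / (c, c/z;q)_∞. -/
/-! With `T(k) = (-1)^k q^{k(k-1)/2} z^k`, the general term times `(c;q)_∞` is `T(k) (cq^k;q)_∞`.
Euler's expansion `(x;q)_∞ = ∑_m (-1)^m q^{m(m-1)/2} x^m / (q;q)_m` at `x = cq^k`, together with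
`binom(k,2) + binom(m,2) + km = binom(k+m,2)`, turns it into `∑_m T(k+m) (c/z)^m / (q;q)_m`.
Substituting `n = k + m`, the double sum factors as `(∑_n T(n)) (∑_m (c/z)^m / (q;q)_m)`, and
Euler's other expansion evaluates the second factor as `1 / (c/z;q)_∞` because `|c/z| < 1`.

The theta series `∑_n T(n)` is evaluated by the same identity at `c = q`: there the terms with
`k < 0` vanish, and Euler's expansion sums the others to `(z;q)_∞`. This proves the Jacobi triple
product `∑_n T(n) = (q, z, q/z;q)_∞` when `|z| > |q|`; the symmetry `z ↦ q/z`, `n ↦ -n` covers the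
remaining `z`. -/

noncomputable section

/-- The infinite q-shifted factorial `(a;q)_∞`. -/
def qpi (q a : ℂ) : ℂ := ∏' j : ℕ, (1 - a * q ^ j)

/-- The q-shifted factorial `(a;q)_k := (a;q)_∞ / (aq^k;q)_∞` for `k ∈ ℤ`. -/
def qpz (q a : ℂ) (k : ℤ) : ℂ := qpi q a / qpi q (a * q ^ k)

/-- The term of the `₀ψ₁` series: `(-1)^k q^{k(k-1)/2} z^k / (c;q)_k`, `k ∈ ℤ`. -/
def psi01Term (q c z : ℂ) (k : ℤ) : ℂ :=
  (-1 : ℂ) ^ k * q ^ (k * (k - 1) / 2) * z ^ k / qpz q c k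

open Filter Topology

/-! ### Infinite sums and products -/

section InfiniteProducts

variable {M : Type*} [CommMonoid M] [TopologicalSpace M] [ContinuousMul M] [T2Space M]
  {a u : ℕ → M} {l : M}

lemma tprod_mul_eq_of_succ_eq_mul (ha : Multipliable a) (hu : Tendsto u atTop (𝓝 l))
    (h : ∀ n, u (n + 1) = a n * u n) : (∏' n, a n) * u 0 = l := by
  have telescope (N : ℕ) : (∏ i ∈ Finset.range N, a i) * u 0 = u N := by
    induction N with
    | zero => simp
    | succ N ih => rw [h, ← ih, Finset.prod_range_succ_comm, mul_assoc]
  refine tendsto_nhds_unique (ha.tendsto_prod_tprod_nat.mul_const (u 0)) ?_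
  simpa only [telescope] using hu

lemma eq_tprod_mul_of_eq_mul_succ (ha : Multipliable a) (hu : Tendsto u atTop (𝓝 l))
    (h : ∀ n, u n = a n * u (n + 1)) : u 0 = (∏' n, a n) * l := by
  have telescope (N : ℕ) : (∏ i ∈ Finset.range N, a i) * u N = u 0 := by
    induction N with
    | zero => simp
    | succ N ih => rw [← ih, h N, Finset.prod_range_succ, mul_assoc]
  refine tendsto_nhds_unique ?_ (ha.tendsto_prod_tprod_nat.mul hu)
  simpa only [telescope] using tendsto_const_nhds

end InfiniteProducts

section InfiniteSums

variable {R : Type*} [NormedRing R] [CompleteSpace R]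

lemma summable_of_succ_eq_mul_of_tendsto {f ρ : ℕ → R} {l : R} (hl : ‖l‖ < 1)
    (hρ : Tendsto ρ atTop (𝓝 l)) (hf : ∀ n, f (n + 1) = ρ n * f n) : Summable f := by
  obtain ⟨r, hlr, hr⟩ := exists_between hl
  refine summable_of_ratio_norm_eventually_le hr ?_
  filter_upwards [hρ.norm.eventually_lt_const hlr] with n hn
  calc ‖f (n + 1)‖ ≤ ‖ρ n‖ * ‖f n‖ := hf n ▸ norm_mul_le _ _
    _ ≤ r * ‖f n‖ := by gcongr

lemma tendsto_tsum_mul_pow_of_tendsto_zero [NormOneClass R] {ι : Type*} {L : Filter ι} {y : ι → R}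
    (hy : Tendsto y L (𝓝 0)) {b : ℕ → R} (hb : Summable fun m => ‖b m‖) :
    Tendsto (fun i => ∑' m, b m * y i ^ m) L (𝓝 (b 0)) := by
  have hlim (m : ℕ) : Tendsto (fun i => b m * y i ^ m) L (𝓝 (b m * 0 ^ m)) :=
    (hy.pow m).const_mul (b m)
  have hbound : ∀ᶠ i in L, ∀ m, ‖b m * y i ^ m‖ ≤ ‖b m‖ := by
    filter_upwards [hy.norm.eventually_lt_const (norm_zero.trans_lt one_pos)] with i hi m
    calc ‖b m * y i ^ m‖ ≤ ‖b m‖ * ‖y i‖ ^ m :=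
          (norm_mul_le _ _).trans (by gcongr; exact norm_pow_le _ _)
      _ ≤ ‖b m‖ := mul_le_of_le_one_right (norm_nonneg _) (pow_le_one₀ (norm_nonneg _) hi.le)
  have hsum : ∑' m, b m * 0 ^ m = b 0 := by
    rw [tsum_eq_single 0 fun m hm => by simp [hm]]
    simp
  exact hsum ▸ tendsto_tsum_of_dominated_convergence hb hlim hbound

lemma hasSum_mul_of_hasSum_shift {G ι : Type*} [AddGroup G] {f u : G → R} {g : ι → R}
    {s : ι → G} (hf : Summable fun k => ‖f k‖) (hg : Summable fun i => ‖g i‖)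
    (h : ∀ k, HasSum (fun i => f (k + s i) * g i) (u k)) :
    HasSum u ((∑' k, f k) * ∑' i, g i) := by
  let shear : G × ι ≃ G × ι :=
    { toFun := fun p => (p.1 + s p.2, p.2)
      invFun := fun p => (p.1 - s p.2, p.2)
      left_inv := fun p => by simp
      right_inv := fun p => by simp }
  have hprod : HasSum (fun p : G × ι => f p.1 * g p.2) ((∑' k, f k) * ∑' i, g i) := by
    rw [tsum_mul_tsum_of_summable_norm hf hg]
    exact (summable_mul_of_summable_norm hf hg).hasSum
  exact (shear.hasSum_iff.mpr hprod).prod_fiberwise h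

end InfiniteSums

lemma summable_and_tsum_nat_add_tsum_neg_sub_one {G : Type*} [AddCommGroup G] [UniformSpace G]
    [IsUniformAddGroup G] [CompleteSpace G] [T2Space G] {f : ℤ → G} {S : G} (h : HasSum f S) :
    Summable (fun k : ℕ => f k) ∧ Summable (fun k : ℕ => f (-(k : ℤ) - 1)) ∧
      ∑' k : ℕ, f k + ∑' k : ℕ, f (-(k : ℤ) - 1) = S := by
  obtain ⟨hnonneg, hneg⟩ := summable_int_iff_summable_nat_and_neg_add_zero.mp h.summable
  simp only [← neg_add']
  exact ⟨hnonneg, hneg, (tsum_of_nat_of_neg_add_one hnonneg hneg).symm.trans h.tsum_eq⟩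

section GeometricSequences

variable {𝕜 : Type*} [NormedField 𝕜] {q x y : 𝕜}

lemma norm_div_lt_one (hxy : ‖x‖ < ‖y‖) : ‖x / y‖ < 1 := by
  rwa [norm_div, div_lt_one ((norm_nonneg x).trans_lt hxy)]

lemma norm_mul_pow_lt_one (hq : ‖q‖ < 1) (hx : ‖x‖ < 1) (n : ℕ) : ‖x * q ^ n‖ < 1 := by
  rw [norm_mul, norm_pow]
  exact mul_lt_one_of_nonneg_of_lt_one_left (norm_nonneg x) hx (pow_le_one₀ (norm_nonneg q) hq.le)

lemma mul_pow_ne_one_of_norm_lt_one (hq : ‖q‖ < 1) (hx : ‖x‖ < 1) (n : ℕ) : x * q ^ n ≠ 1 :=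
  fun h => (norm_mul_pow_lt_one hq hx n).ne (h ▸ norm_one)

lemma tendsto_one_sub_mul_pow (hq : ‖q‖ < 1) (x : 𝕜) :
    Tendsto (fun m : ℕ => 1 - x * q ^ m) atTop (𝓝 1) := by
  simpa using ((tendsto_pow_atTop_nhds_zero_of_norm_lt_one hq).const_mul x).const_sub 1

lemma summable_norm_mul_pow (hq : ‖q‖ < 1) (x : 𝕜) : Summable fun j : ℕ => ‖x * q ^ j‖ := by
  simpa only [norm_mul, norm_pow] using
    (summable_geometric_of_lt_one (norm_nonneg q) hq).mul_left ‖x‖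

end GeometricSequences

/-! ### The q-shifted factorials -/

section QShiftedFactorial

variable {q : ℂ}

lemma multipliable_one_sub_mul_pow (hq : ‖q‖ < 1) (x : ℂ) :
    Multipliable fun j : ℕ => 1 - x * q ^ j := by
  simpa only [neg_mul, ← sub_eq_add_neg] using
    multipliable_one_add_of_summable (summable_norm_mul_pow hq (-x))

lemma qpi_eq_one_sub_mul (hq : ‖q‖ < 1) (x : ℂ) : qpi q x = (1 - x) * qpi q (x * q) := by
  have hshift (j : ℕ) : 1 - x * q ^ (j + 1) = 1 - x * q * q ^ j := by ring
  have hmul : Multipliable fun j : ℕ => 1 - x * q ^ (j + 1) := by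
    simpa only [hshift] using multipliable_one_sub_mul_pow hq (x * q)
  calc qpi q x = (1 - x * q ^ 0) * ∏' j : ℕ, (1 - x * q ^ (j + 1)) :=
        tprod_eq_zero_mul' (f := fun j : ℕ => 1 - x * q ^ j) hmul
    _ = (1 - x) * qpi q (x * q) := by rw [pow_zero, mul_one, tprod_congr hshift, qpi]

lemma qpi_eq_zero_iff (hq : ‖q‖ < 1) {x : ℂ} : qpi q x = 0 ↔ ∃ n : ℕ, x * q ^ n = 1 := by
  refine ⟨fun h => ?_, fun ⟨n, hn⟩ => tprod_of_exists_eq_zero ⟨n, by rw [hn, sub_self]⟩⟩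
  by_contra! hne
  refine tprod_one_add_ne_zero_of_summable (f := fun j : ℕ => -x * q ^ j) (fun n => ?_)
    (summable_norm_mul_pow hq (-x)) ?_
  · simpa only [neg_mul, ← sub_eq_add_neg] using sub_ne_zero.mpr (hne n).symm
  · simpa only [neg_mul, ← sub_eq_add_neg, qpi] using h

lemma qpi_ne_zero (hq : ‖q‖ < 1) {x : ℂ} (hx : ∀ n : ℕ, x * q ^ n ≠ 1) : qpi q x ≠ 0 :=
  mt (qpi_eq_zero_iff hq).mp (not_exists.mpr hx)

lemma qpi_ne_zero_of_norm_lt_one (hq : ‖q‖ < 1) {x : ℂ} (hx : ‖x‖ < 1) : qpi q x ≠ 0 :=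
  qpi_ne_zero hq (mul_pow_ne_one_of_norm_lt_one hq hx)

lemma qpz_zero {x : ℂ} (hx : qpi q x ≠ 0) : qpz q x 0 = 1 := by
  rw [qpz, zpow_zero, mul_one, div_self hx]

lemma qpz_natCast_succ (hq : ‖q‖ < 1) {x : ℂ} (m : ℕ) (hx : x * q ^ m ≠ 1) :
    qpz q x (m + 1 : ℕ) = (1 - x * q ^ m) * qpz q x m := by
  rw [qpz, qpz, zpow_natCast, zpow_natCast, qpi_eq_one_sub_mul hq (x * q ^ m), pow_succ, mul_assoc,
    mul_div_assoc', mul_div_mul_left _ _ (sub_ne_zero.mpr hx.symm)]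

end QShiftedFactorial

/-! ### Theta series -/

/-- The term `(-1)^k q^{k(k-1)/2} z^k` of the theta series of the Jacobi triple product, which is
the numerator of `psi01Term`. -/
def thetaTerm (q z : ℂ) (k : ℤ) : ℂ := (-1 : ℂ) ^ k * q ^ (k * (k - 1) / 2) * z ^ k

section Theta

variable {q : ℂ}

lemma add_mul_pred_ediv_two (k m : ℤ) :
    (k + m) * (k + m - 1) / 2 = k * (k - 1) / 2 + m * (m - 1) / 2 + k * m := by
  obtain ⟨a, ha⟩ := Int.even_mul_pred_self k
  obtain ⟨b, hb⟩ := Int.even_mul_pred_self m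
  have h : (k + m) * (k + m - 1) = k * (k - 1) + m * (m - 1) + 2 * (k * m) := by ring
  rw [h, ha, hb]
  lia

lemma neg_mul_pred_ediv_two (k : ℤ) : -k * (-k - 1) / 2 = k * (k - 1) / 2 + k := by
  obtain ⟨a, ha⟩ := Int.even_mul_pred_self k
  have h : -k * (-k - 1) = k * (k - 1) + 2 * k := by ring
  rw [h, ha]
  lia

lemma thetaTerm_zero (z : ℂ) : thetaTerm q z 0 = 1 := by simp [thetaTerm]

lemma thetaTerm_mul (x y : ℂ) (k : ℤ) : thetaTerm q (x * y) k = thetaTerm q x k * y ^ k := by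
  rw [thetaTerm, thetaTerm, mul_zpow, mul_assoc _ (x ^ k)]

lemma thetaTerm_add (hq0 : q ≠ 0) {z : ℂ} (hz : z ≠ 0) (k m : ℤ) :
    thetaTerm q z (k + m) = thetaTerm q z k * thetaTerm q (z * q ^ k) m := by
  simp only [thetaTerm, add_mul_pred_ediv_two, zpow_add₀ hq0, zpow_add₀ hz, mul_zpow, zpow_mul,
    zpow_add₀ (neg_ne_zero.mpr (one_ne_zero (α := ℂ)))]
  ring

lemma thetaTerm_natCast_succ (hq0 : q ≠ 0) (z : ℂ) (m : ℕ) :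
    thetaTerm q z (m + 1 : ℕ) = -(z * q ^ m) * thetaTerm q z m := by
  simp only [thetaTerm, Nat.cast_succ, add_mul_pred_ediv_two (m : ℤ) 1, zpow_add₀ hq0]
  simp only [← Nat.cast_succ, zpow_natCast, pow_succ]
  norm_num
  ring

lemma thetaTerm_neg (hq0 : q ≠ 0) (z : ℂ) (k : ℤ) :
    thetaTerm q z (-k) = thetaTerm q (q / z) k := by
  rw [thetaTerm, thetaTerm, neg_mul_pred_ediv_two, zpow_add₀ hq0, div_zpow, zpow_neg, zpow_neg,
    ← inv_zpow, inv_neg_one]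
  ring

lemma summable_thetaTerm_natCast (hq0 : q ≠ 0) (hq : ‖q‖ < 1) (z : ℂ) :
    Summable fun m : ℕ => thetaTerm q z m := by
  have hratio : Tendsto (fun m : ℕ => -(z * q ^ m)) atTop (𝓝 (-(z * 0))) :=
    ((tendsto_pow_atTop_nhds_zero_of_norm_lt_one hq).const_mul z).neg
  exact summable_of_succ_eq_mul_of_tendsto (by simp) hratio (thetaTerm_natCast_succ hq0 z)

lemma summable_thetaTerm (hq0 : q ≠ 0) (hq : ‖q‖ < 1) (z : ℂ) : Summable (thetaTerm q z) := by
  refine .of_nat_of_neg (summable_thetaTerm_natCast hq0 hq z) ?_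
  simpa only [thetaTerm_neg hq0] using summable_thetaTerm_natCast hq0 hq (q / z)

end Theta

/-! ### Euler's expansions -/

section Euler

variable {q : ℂ}

lemma qpi_self_ne_zero (hq : ‖q‖ < 1) : qpi q q ≠ 0 := qpi_ne_zero_of_norm_lt_one hq hq

lemma qpz_self_natCast_succ (hq : ‖q‖ < 1) (m : ℕ) :
    qpz q q (m + 1 : ℕ) = (1 - q * q ^ m) * qpz q q m :=
  qpz_natCast_succ hq m (mul_pow_ne_one_of_norm_lt_one hq hq m)

lemma qpz_self_natCast_ne_zero (hq : ‖q‖ < 1) (m : ℕ) : qpz q q m ≠ 0 := by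
  induction m with
  | zero => simp [qpz_zero (qpi_self_ne_zero hq)]
  | succ m ih =>
    rw [qpz_self_natCast_succ hq]
    exact mul_ne_zero (sub_ne_zero.mpr (mul_pow_ne_one_of_norm_lt_one hq hq m).symm) ih

lemma summable_pow_div_qpz (hq : ‖q‖ < 1) {x : ℂ} (hx : ‖x‖ < 1) :
    Summable fun m : ℕ => x ^ m / qpz q q m := by
  have hratio : Tendsto (fun m : ℕ => x / (1 - q * q ^ m)) atTop (𝓝 (x / 1)) :=
    tendsto_const_nhds.div (tendsto_one_sub_mul_pow hq q) one_ne_zero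
  refine summable_of_succ_eq_mul_of_tendsto (by rwa [div_one]) hratio fun m => ?_
  rw [qpz_self_natCast_succ hq, pow_succ', div_mul_div_comm]

lemma psi01Term_eq_thetaTerm_div (c z : ℂ) (k : ℤ) :
    psi01Term q c z k = thetaTerm q z k / qpz q c k := rfl

lemma summable_psi01Term_self (hq0 : q ≠ 0) (hq : ‖q‖ < 1) (x : ℂ) :
    Summable fun m : ℕ => psi01Term q q x m := by
  have hratio : Tendsto (fun m : ℕ => -(x * q ^ m) / (1 - q * q ^ m)) atTop (𝓝 (-(x * 0) / 1)) :=
    ((tendsto_pow_atTop_nhds_zero_of_norm_lt_one hq).const_mul x).neg.div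
      (tendsto_one_sub_mul_pow hq q) one_ne_zero
  refine summable_of_succ_eq_mul_of_tendsto (by simp) hratio fun m => ?_
  rw [psi01Term_eq_thetaTerm_div, psi01Term_eq_thetaTerm_div, qpz_self_natCast_succ hq,
    thetaTerm_natCast_succ hq0, div_mul_div_comm]

lemma tsum_pow_div_qpz_mul (hq : ‖q‖ < 1) {x : ℂ} (hx : ‖x‖ < 1) :
    ∑' m : ℕ, (x * q) ^ m / qpz q q m = (1 - x) * ∑' m : ℕ, x ^ m / qpz q q m := by
  have hxq : ‖x * q‖ < 1 := by simpa only [pow_one] using norm_mul_pow_lt_one hq hx 1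
  have hs := summable_pow_div_qpz hq hx
  have hsq := summable_pow_div_qpz hq hxq
  have hdiff (m : ℕ) : x ^ (m + 1) / qpz q q (m + 1 : ℕ) - (x * q) ^ (m + 1) / qpz q q (m + 1 : ℕ)
      = x * (x ^ m / qpz q q m) := by
    have hne := qpz_self_natCast_ne_zero hq m
    have hfactor := sub_ne_zero.mpr (mul_pow_ne_one_of_norm_lt_one hq hq m).symm
    rw [qpz_self_natCast_succ hq, ← sub_div, ← mul_div_assoc,
      div_eq_div_iff (mul_ne_zero hfactor hne) hne]
    ring
  have htel := (hs.sub hsq).tsum_eq_zero_add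
  simp only [hdiff, pow_zero, sub_self, zero_add, tsum_mul_left] at htel
  rw [hs.tsum_sub hsq] at htel
  linear_combination -htel

lemma tsum_psi01Term_self_eq_one_sub_mul (hq0 : q ≠ 0) (hq : ‖q‖ < 1) (x : ℂ) :
    ∑' m : ℕ, psi01Term q q x m = (1 - x) * ∑' m : ℕ, psi01Term q q (x * q) m := by
  have hs := summable_psi01Term_self hq0 hq x
  have hsq := summable_psi01Term_self hq0 hq (x * q)
  have hdiff (m : ℕ) : psi01Term q q x (m + 1 : ℕ) - psi01Term q q (x * q) (m + 1 : ℕ)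
      = -x * psi01Term q q (x * q) m := by
    have hne := qpz_self_natCast_ne_zero hq m
    have hfactor := sub_ne_zero.mpr (mul_pow_ne_one_of_norm_lt_one hq hq m).symm
    simp only [psi01Term_eq_thetaTerm_div, qpz_self_natCast_succ hq, thetaTerm_mul, zpow_natCast,
      thetaTerm_natCast_succ hq0]
    rw [← sub_div, ← mul_div_assoc, div_eq_div_iff (mul_ne_zero hfactor hne) hne]
    ring
  have hzero : psi01Term q q x (0 : ℕ) - psi01Term q q (x * q) (0 : ℕ) = 0 := by
    simp [psi01Term_eq_thetaTerm_div, thetaTerm_zero]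
  have htel := (hs.sub hsq).tsum_eq_zero_add
  simp only [hdiff, hzero, zero_add, tsum_mul_left] at htel
  rw [hs.tsum_sub hsq] at htel
  linear_combination htel

lemma qpi_mul_tsum_pow_div_qpz (hq : ‖q‖ < 1) {x : ℂ} (hx : ‖x‖ < 1) :
    qpi q x * ∑' m : ℕ, x ^ m / qpz q q m = 1 := by
  let u (N : ℕ) : ℂ := ∑' m : ℕ, (x * q ^ N) ^ m / qpz q q m
  have hu : Tendsto u atTop (𝓝 1) := by
    have h := tendsto_tsum_mul_pow_of_tendsto_zero (tendsto_pow_atTop_nhds_zero_of_norm_lt_one hq)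
      (summable_pow_div_qpz hq hx).norm
    simpa [u, mul_pow, div_mul_eq_mul_div, qpz_zero (qpi_self_ne_zero hq)] using h
  have hrec (N : ℕ) : u (N + 1) = (1 - x * q ^ N) * u N := by
    simpa only [u, pow_succ, mul_assoc] using
      tsum_pow_div_qpz_mul hq (norm_mul_pow_lt_one hq hx N)
  have h := tprod_mul_eq_of_succ_eq_mul (multipliable_one_sub_mul_pow hq x) hu hrec
  simpa [u, qpi] using h

lemma hasSum_psi01Term_self_natCast (hq0 : q ≠ 0) (hq : ‖q‖ < 1) (x : ℂ) :
    HasSum (fun m : ℕ => psi01Term q q x m) (qpi q x) := by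
  let u (N : ℕ) : ℂ := ∑' m : ℕ, psi01Term q q (x * q ^ N) m
  have hs := summable_psi01Term_self hq0 hq x
  have hu : Tendsto u atTop (𝓝 1) := by
    have h := tendsto_tsum_mul_pow_of_tendsto_zero (tendsto_pow_atTop_nhds_zero_of_norm_lt_one hq)
      hs.norm
    simpa [u, psi01Term_eq_thetaTerm_div, thetaTerm_mul, thetaTerm_zero, div_mul_eq_mul_div,
      qpz_zero (qpi_self_ne_zero hq)] using h
  have hrec (N : ℕ) : u N = (1 - x * q ^ N) * u (N + 1) := by
    simpa only [u, pow_succ, mul_assoc] using tsum_psi01Term_self_eq_one_sub_mul hq0 hq (x * q ^ N)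
  have h := eq_tprod_mul_of_eq_mul_succ (multipliable_one_sub_mul_pow hq x) hu hrec
  rw [hs.hasSum_iff]
  simpa [u, qpi] using h

end Euler

/-! ### The bilateral series -/

section Bilateral

variable {q c z : ℂ}

lemma psi01Term_mul_qpi (hc : qpi q c ≠ 0) (k : ℤ) :
    psi01Term q c z k * qpi q c = thetaTerm q z k * qpi q (c * q ^ k) := by
  -- Where `(cq^k;q)_∞ = 0`, `qpz` is the junk value `x / 0 = 0`, and `y / 0` is the intended `0`.
  rw [psi01Term_eq_thetaTerm_div, qpz, div_div_eq_mul_div, div_mul_cancel₀ _ hc]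

lemma hasSum_thetaTerm_add_mul (hq0 : q ≠ 0) (hq : ‖q‖ < 1) (hz : z ≠ 0) (c : ℂ) (k : ℤ) :
    HasSum (fun m : ℕ => thetaTerm q z (k + m) * ((c / z) ^ m / qpz q q m))
      (thetaTerm q z k * qpi q (c * q ^ k)) := by
  have hc : c * q ^ k = z * q ^ k * (c / z) := by field_simp
  refine ((hasSum_psi01Term_self_natCast hq0 hq (c * q ^ k)).mul_left _).congr_fun fun m => ?_
  rw [psi01Term_eq_thetaTerm_div, thetaTerm_add hq0 hz, hc, thetaTerm_mul _ (c / z), zpow_natCast]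
  ring

lemma hasSum_psi01Term_tsum_thetaTerm (hq0 : q ≠ 0) (hq : ‖q‖ < 1) (hcz : ‖c‖ < ‖z‖)
    (hc : ∀ n : ℕ, c * q ^ n ≠ 1) :
    HasSum (psi01Term q c z) ((∑' k, thetaTerm q z k) / (qpi q c * qpi q (c / z))) := by
  have hz : z ≠ 0 := norm_pos_iff.mp ((norm_nonneg c).trans_lt hcz)
  have hx := norm_div_lt_one hcz
  have hc' : qpi q c ≠ 0 := qpi_ne_zero hq hc
  have hfactor : HasSum (fun k => psi01Term q c z k * qpi q c)
      ((∑' k, thetaTerm q z k) * ∑' m : ℕ, (c / z) ^ m / qpz q q m) := by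
    simp only [psi01Term_mul_qpi hc']
    exact hasSum_mul_of_hasSum_shift (summable_thetaTerm hq0 hq z).norm
      (summable_pow_div_qpz hq hx).norm (hasSum_thetaTerm_add_mul hq0 hq hz c)
  rw [eq_inv_of_mul_eq_one_right (qpi_mul_tsum_pow_div_qpz hq hx), ← div_eq_mul_inv] at hfactor
  rw [← hasSum_mul_right_iff hc', mul_comm (qpi q c), ← div_div, div_mul_cancel₀ _ hc']
  exact hfactor

lemma psi01Term_self_eq_zero_of_neg (hq0 : q ≠ 0) (hq : ‖q‖ < 1) (z : ℂ) {k : ℤ} (hk : k < 0) :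
    psi01Term q q z k = 0 := by
  have hfactor : q * q ^ k * q ^ (-k - 1).toNat = 1 := by
    rw [← zpow_natCast, Int.toNat_of_nonneg (by lia), ← zpow_one_add₀ hq0, ← zpow_add₀ hq0,
      show 1 + k + (-k - 1) = 0 by ring, zpow_zero]
  refine (mul_eq_zero.mp ?_).resolve_right (qpi_self_ne_zero hq)
  rw [psi01Term_mul_qpi (qpi_self_ne_zero hq), (qpi_eq_zero_iff hq).mpr ⟨_, hfactor⟩, mul_zero]

lemma hasSum_psi01Term_self (hq0 : q ≠ 0) (hq : ‖q‖ < 1) (z : ℂ) :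
    HasSum (psi01Term q q z) (qpi q z) := by
  refine (Function.Injective.hasSum_iff Nat.cast_injective fun k hk => ?_).mp
    (hasSum_psi01Term_self_natCast hq0 hq z)
  exact psi01Term_self_eq_zero_of_neg hq0 hq z
    (not_le.mp fun h => hk ⟨k.toNat, Int.toNat_of_nonneg h⟩)

lemma tsum_thetaTerm_of_norm_lt (hq0 : q ≠ 0) (hq : ‖q‖ < 1) (hqz : ‖q‖ < ‖z‖) :
    ∑' k, thetaTerm q z k = qpi q q * qpi q z * qpi q (q / z) := by
  have hne : qpi q q * qpi q (q / z) ≠ 0 :=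
    mul_ne_zero (qpi_self_ne_zero hq) (qpi_ne_zero_of_norm_lt_one hq (norm_div_lt_one hqz))
  have htheta := hasSum_psi01Term_tsum_thetaTerm hq0 hq hqz (mul_pow_ne_one_of_norm_lt_one hq hq)
  have h := htheta.unique (hasSum_psi01Term_self hq0 hq z)
  rw [(div_eq_iff hne).mp h]
  ring

theorem jacobi_triple_product (hq0 : q ≠ 0) (hq : ‖q‖ < 1) (hz : z ≠ 0) :
    ∑' k, thetaTerm q z k = qpi q q * qpi q z * qpi q (q / z) := by
  rcases lt_or_ge ‖q‖ ‖z‖ with hqz | hzq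
  · exact tsum_thetaTerm_of_norm_lt hq0 hq hqz
  · have hlt : ‖q‖ < ‖q / z‖ := by
      rw [norm_div, lt_div_iff₀ (norm_pos_iff.mpr hz)]
      exact mul_lt_of_lt_one_right (norm_pos_iff.mpr hq0) (hzq.trans_lt hq)
    calc ∑' k, thetaTerm q z k = ∑' k, thetaTerm q (q / z) k := by
          rw [← (Equiv.neg ℤ).tsum_eq]
          simp only [Equiv.neg_apply, thetaTerm_neg hq0]
      _ = qpi q q * qpi q (q / z) * qpi q z := by
          rw [tsum_thetaTerm_of_norm_lt hq0 hq hlt, div_div_cancel₀ hq0]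
      _ = qpi q q * qpi q z * qpi q (q / z) := mul_right_comm _ _ _

theorem stmt11_general (hq0 : q ≠ 0) (hq : ‖q‖ < 1) (hcz : ‖c‖ < ‖z‖)
    (hc : ∀ n : ℕ, c * q ^ n ≠ 1) :
    HasSum (psi01Term q c z)
      (qpi q q * qpi q z * qpi q (q / z) / (qpi q c * qpi q (c / z))) := by
  have hz : z ≠ 0 := norm_pos_iff.mp ((norm_nonneg c).trans_lt hcz)
  exact jacobi_triple_product hq0 hq hz ▸ hasSum_psi01Term_tsum_thetaTerm hq0 hq hcz hc

end Bilateral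

/-- For `0<q<1`, `z ≠ 0`, `|z| > |c|` and `c ∉ {q^{-n} : n ≥ 0}`, both one-sided
series converge and
`Σ_{k=-∞}^∞ (-1)^k q^{k(k-1)/2} z^k/(c;q)_k = (q,z,q/z;q)_∞ / (c,c/z;q)_∞`. -/
theorem stmt11 (q : ℝ) (hq0 : 0 < q) (hq1 : q < 1) (c z : ℂ)
    (hz0 : z ≠ 0) (hzc : ‖c‖ < ‖z‖)
    (hc : ∀ n : ℕ, c * (q : ℂ) ^ n ≠ 1) :
    Summable (fun k : ℕ => psi01Term (q : ℂ) c z (k : ℤ)) ∧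
    Summable (fun k : ℕ => psi01Term (q : ℂ) c z (-(k : ℤ) - 1)) ∧
    (∑' k : ℕ, psi01Term (q : ℂ) c z (k : ℤ)) +
        (∑' k : ℕ, psi01Term (q : ℂ) c z (-(k : ℤ) - 1)) =
      qpi (q : ℂ) (q : ℂ) * qpi (q : ℂ) z * qpi (q : ℂ) ((q : ℂ) / z) /
        (qpi (q : ℂ) c * qpi (q : ℂ) (c / z)) := by
  have hq : ‖(q : ℂ)‖ < 1 := by rwa [Complex.norm_of_nonneg hq0.le]
  exact summable_and_tsum_nat_add_tsum_neg_sub_one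
    (stmt11_general (Complex.ofReal_ne_zero.mpr hq0.ne') hq hzc hc)
end
end
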